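/- arXiv:0803.1109 — 2 statements merged into one kernel-verified Lean document; each statement's English description precedes it below -/
import Mathlib

section
/- Let k ≥ 1 and let f : [φ(N_k), ∞) → ℝ be a strictly increasing function satisfying N_k/φ(N_k) ≤ f(φ(N_k)). Then for every integer n with N_k < n < N_{k+1}, one has n/φ(n) < f(φ(n)). -/
/-!
Write `φ(m) = m · ∏_{p ∣ m} (1 - 1/p)`. The `i`-th smallest element of a finite set of primes is at
least the `i`-th prime, so a monotone nonnegative function has its smallest product over `m` primes
at the first `m` primes (`prod_nth_le_prod`). Applied to the identity, this shows that
`n < N_{k+1}` has at most `k` prime factors (`card_primeFactors_le`). Applied to `p ↦ 1 - 1/p`,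
whose values are at most `1`, it then gives `φ(N_k)/N_k ≤ φ(n)/n` (`totient_Nk_mul_le`).
Since `n > N_k`, this forces `φ(n) > φ(N_k)`, and the strict monotonicity of `f` yields
`n/φ(n) ≤ N_k/φ(N_k) ≤ f(φ(N_k)) < f(φ(n))`.
-/

open Real

/-- `Nk k` is the product of the first `k` primes (the `k`-th primorial). -/
noncomputable def Nk (k : ℕ) : ℕ := ∏ i ∈ Finset.range k, Nat.nth Nat.Prime i

/-- Among all sets of primes of a given size, the first primes minimise the product of the values
of a function that is monotone and nonnegative on the positive integers; positivity of the argument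
is required because `1 - 0⁻¹ = 1` breaks monotonicity of `a ↦ 1 - a⁻¹` at `0`. -/
theorem prod_nth_le_prod (g : ℕ → ℚ) (hg : ∀ a b, 0 < a → a ≤ b → g a ≤ g b)
    (hg0 : ∀ a, 0 < a → 0 ≤ g a) (s : Finset ℕ) (hs : ∀ p ∈ s, p.Prime) :
    ∏ i ∈ Finset.range s.card, g (Nat.nth Nat.Prime i) ≤ ∏ p ∈ s, g p := by
  induction s using Finset.induction_on_max with
  | empty => simp
  | insert a s hmax ih =>
    have ha : a ∉ s := fun h => lt_irrefl _ (hmax a h)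
    have hap : a.Prime := hs a (Finset.mem_insert_self a s)
    have hs' : ∀ p ∈ s, p.Prime := fun p hp => hs p (Finset.mem_insert_of_mem hp)
    -- `s` consists of primes below `a`, so `a` has index at least `s.card` among the primes.
    have hcount : s.card ≤ Nat.count Nat.Prime a := by
      rw [Nat.count_eq_card_filter_range]
      exact Finset.card_le_card fun p hp =>
        Finset.mem_filter.2 ⟨Finset.mem_range.2 (hmax p hp), hs' p hp⟩
    have hle : Nat.nth Nat.Prime s.card ≤ a :=
      (Nat.nth_monotone Nat.infinite_setOfPred_prime hcount).trans_eq (Nat.nth_count hap)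
    rw [Finset.card_insert_of_notMem ha, Finset.prod_range_succ, Finset.prod_insert ha,
      mul_comm (g a)]
    exact mul_le_mul (ih hs') (hg _ _ (Nat.prime_nth_prime _).pos hle)
      (hg0 _ (Nat.prime_nth_prime _).pos)
      (Finset.prod_nonneg fun p hp => hg0 p (hs' p hp).pos)

theorem Nk_pos (k : ℕ) : 0 < Nk k :=
  Finset.prod_pos fun i _ => (Nat.prime_nth_prime i).pos

theorem card_primeFactors_le {k n : ℕ} (hn : n ≠ 0) (h : n < Nk (k + 1)) :
    n.primeFactors.card ≤ k := by
  by_contra! hk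
  have h1 := prod_nth_le_prod (fun a => (a : ℚ)) (fun a b _ hab => by exact_mod_cast hab)
    (fun a _ => by positivity) n.primeFactors fun p hp => Nat.prime_of_mem_primeFactors hp
  have h2 : Nk n.primeFactors.card ≤ ∏ p ∈ n.primeFactors, p := by
    rw [Nk, ← Nat.cast_le (α := ℚ), Nat.cast_prod, Nat.cast_prod]
    exact h1
  have h3 : Nk (k + 1) ≤ Nk n.primeFactors.card :=
    Nat.le_of_dvd (Nk_pos _)
      (Finset.prod_dvd_prod_of_subset _ _ _ (Finset.range_subset_range.2 hk))
  have h4 := Nat.le_of_dvd (Nat.pos_of_ne_zero hn) (Nat.prod_primeFactors_dvd n)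
  omega

theorem totient_Nk (k : ℕ) :
    ((Nk k).totient : ℚ) =
      Nk k * ∏ i ∈ Finset.range k, (1 - ((Nat.nth Nat.Prime i : ℕ) : ℚ)⁻¹) := by
  have hinj := Nat.nth_injective Nat.infinite_setOfPred_prime
  have hpf : (Nk k).primeFactors = (Finset.range k).image (Nat.nth Nat.Prime) := by
    have h : Nk k = ∏ p ∈ (Finset.range k).image (Nat.nth Nat.Prime), p := by
      rw [Finset.prod_image hinj.injOn]; rfl
    rw [h]
    refine Nat.primeFactors_prod fun p hp => ?_
    obtain ⟨i, -, rfl⟩ := Finset.mem_image.1 hp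
    exact Nat.prime_nth_prime i
  rw [Nat.totient_eq_mul_prod_factors, hpf, Finset.prod_image hinj.injOn]

/-- The ratio `φ(n)/n` is at least `φ(N_k)/N_k` for `0 < n < N_{k+1}`, in cross-multiplied form. -/
theorem totient_Nk_mul_le {k n : ℕ} (hn : n ≠ 0) (h : n < Nk (k + 1)) :
    (Nk k).totient * n ≤ n.totient * Nk k := by
  have hg0 : ∀ a : ℕ, 0 < a → (0 : ℚ) ≤ 1 - (a : ℚ)⁻¹ := fun a ha => by
    have : (1 : ℚ) ≤ a := by exact_mod_cast ha
    linarith [inv_le_one_of_one_le₀ this]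
  have h1 := prod_nth_le_prod (fun a => 1 - (a : ℚ)⁻¹)
    (fun a b ha hab => by
      have : (0 : ℚ) < a := by exact_mod_cast ha
      have hab' : (a : ℚ) ≤ b := by exact_mod_cast hab
      gcongr)
    hg0 n.primeFactors fun p hp => Nat.prime_of_mem_primeFactors hp
  have h2 : ∏ i ∈ Finset.range k, (1 - ((Nat.nth Nat.Prime i : ℕ) : ℚ)⁻¹) ≤
      ∏ i ∈ Finset.range n.primeFactors.card, (1 - ((Nat.nth Nat.Prime i : ℕ) : ℚ)⁻¹) :=
    Finset.prod_le_prod_of_subset_of_le_one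
      (Finset.range_subset_range.2 (card_primeFactors_le hn h))
      (fun i _ => hg0 _ (Nat.prime_nth_prime i).pos)
      (fun i _ _ => by simp)
  have h3 : ((Nk k).totient : ℚ) * n ≤ n.totient * Nk k := by
    rw [totient_Nk, Nat.totient_eq_mul_prod_factors n, mul_right_comm, mul_right_comm (n : ℚ),
      mul_comm (n : ℚ) (Nk k : ℚ)]
    exact mul_le_mul_of_nonneg_left (h2.trans h1) (by positivity)
  exact_mod_cast h3

/-- Let `k ≥ 1` and let `f` be strictly increasing on `[φ(N_k), ∞)` with
`N_k/φ(N_k) ≤ f(φ(N_k))`. Then for every `n` with `N_k < n < N_{k+1}` one has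
`n/φ(n) < f(φ(n))`. -/
theorem stmt_8 (k : ℕ) (hk : 1 ≤ k) (f : ℝ → ℝ)
    (hf : StrictMonoOn f (Set.Ici (Nat.totient (Nk k) : ℝ)))
    (hfN : (Nk k : ℝ) / (Nat.totient (Nk k) : ℝ) ≤ f (Nat.totient (Nk k) : ℝ))
    (n : ℕ) (h1 : Nk k < n) (h2 : n < Nk (k + 1)) :
    (n : ℝ) / (Nat.totient n : ℝ) < f (Nat.totient n : ℝ) := by
  have hn : 0 < n := (Nat.zero_le _).trans_lt h1
  have hφN : 0 < (Nk k).totient := Nat.totient_pos.2 (Nk_pos k)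
  have hφn : 0 < n.totient := Nat.totient_pos.2 hn
  have hmul := totient_Nk_mul_le hn.ne' h2
  have hlt : (Nk k).totient < n.totient := by
    by_contra! hle
    have := Nk_pos k
    nlinarith
  have hratio : (n : ℝ) / (n.totient : ℝ) ≤ (Nk k : ℝ) / ((Nk k).totient : ℝ) := by
    rw [div_le_div_iff₀ (by exact_mod_cast hφn) (by exact_mod_cast hφN)]
    have : ((Nk k).totient : ℝ) * n ≤ n.totient * Nk k := by exact_mod_cast hmul
    linarith
  have hlt' : ((Nk k).totient : ℝ) < n.totient := by exact_mod_cast hlt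
  exact (hratio.trans hfN).trans_lt (hf Set.self_mem_Ici hlt'.le hlt')
end

section
/- Let ε > 0 and let N ≥ 1 be a (σ,τ)-superchampion with parameter ε. Then for all primes p > q, the exponent of p in the prime factorization of N is at most the exponent of q in the prime factorization of N, i.e. v_p(N) ≤ v_q(N). -/
/-!
Suppose `a = v_p(N) > b = v_q(N)` and write `N = m * p ^ a * q ^ b` with `m` coprime to `p * q`.
Exchanging the two exponents gives `N' = m * q ^ a * p ^ b`, with `τ(N') = τ(N)`, so it is enough
to see that `σ(N') / N' > σ(N) / N`. Since `σ(r ^ k) / r ^ k = ∑_{i ≤ k} r⁻ⁱ`, this amounts, with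
`x = 1 / p < y = 1 / q`, to
`(∑_{i ≤ a} xⁱ) (∑_{i ≤ b} yⁱ) < (∑_{i ≤ a} yⁱ) (∑_{i ≤ b} xⁱ)`.
After the common product of the two sums up to `b` is cancelled, it holds term by term:
`xʲ yⁱ < yʲ xⁱ` for `i < j`. This is `geom_swap_lt`.
-/

open Real

/-- The sum of the divisors of `n`. -/
def sigmaFn (n : ℕ) : ℕ := ∑ d ∈ n.divisors, d

/-- The number of divisors of `n`. -/
def tauFn (n : ℕ) : ℕ := n.divisors.card

/-- `N` is a `(σ,τ)`-superchampion with parameter `ε > 0` if the function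
`n ↦ σ(n)/(n·τ(n)^ε)` attains its maximum at `N`. -/
def IsSuperChampion (ε : ℝ) (N : ℕ) : Prop :=
  1 ≤ N ∧ ∀ n : ℕ, 1 ≤ n →
    (sigmaFn n : ℝ) / ((n : ℝ) * (tauFn n : ℝ) ^ ε) ≤
      (sigmaFn N : ℝ) / ((N : ℝ) * (tauFn N : ℝ) ^ ε)

theorem geom_swap_lt {x y : ℝ} (hx : 0 < x) (hxy : x < y) {a b : ℕ} (hab : b < a) :
    (∑ i ∈ Finset.range (a + 1), x ^ i) * (∑ i ∈ Finset.range (b + 1), y ^ i) <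
      (∑ i ∈ Finset.range (a + 1), y ^ i) * (∑ i ∈ Finset.range (b + 1), x ^ i) := by
  have hy : 0 < y := hx.trans hxy
  have term : ∀ i j : ℕ, i < j → x ^ j * y ^ i < y ^ j * x ^ i := by
    intro i j hij
    obtain ⟨k, rfl⟩ := Nat.exists_eq_add_of_lt hij
    have h1 : x ^ (k + 1) < y ^ (k + 1) := pow_lt_pow_left₀ hxy hx.le (by omega)
    have h2 : 0 < x ^ i * y ^ i := by positivity
    calc x ^ (i + k + 1) * y ^ i = (x ^ i * y ^ i) * x ^ (k + 1) := by ring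
      _ < (x ^ i * y ^ i) * y ^ (k + 1) := mul_lt_mul_of_pos_left h1 h2
      _ = y ^ (i + k + 1) * x ^ i := by ring
  have hle : b + 1 ≤ a + 1 := by omega
  rw [← Finset.sum_range_add_sum_Ico (fun i => x ^ i) hle,
    ← Finset.sum_range_add_sum_Ico (fun i => y ^ i) hle, add_mul, add_mul]
  have key : (∑ j ∈ Finset.Ico (b + 1) (a + 1), x ^ j) * (∑ i ∈ Finset.range (b + 1), y ^ i) <
      (∑ j ∈ Finset.Ico (b + 1) (a + 1), y ^ j) * (∑ i ∈ Finset.range (b + 1), x ^ i) := by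
    rw [Finset.sum_mul_sum, Finset.sum_mul_sum]
    refine Finset.sum_lt_sum_of_nonempty (Finset.nonempty_Ico.mpr (by omega)) fun j hj => ?_
    refine Finset.sum_lt_sum_of_nonempty (Finset.nonempty_range_iff.mpr (by omega)) fun i hi => ?_
    rw [Finset.mem_Ico] at hj
    rw [Finset.mem_range] at hi
    exact term i j (by omega)
  linarith [mul_comm (∑ i ∈ Finset.range (b + 1), x ^ i) (∑ i ∈ Finset.range (b + 1), y ^ i)]

theorem sigmaFn_prime_pow_div {p : ℕ} (hp : p.Prime) (k : ℕ) :
    (sigmaFn (p ^ k) : ℝ) / (p : ℝ) ^ k = ∑ i ∈ Finset.range (k + 1), (1 / (p : ℝ)) ^ i := by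
  have hp0 : (p : ℝ) ≠ 0 := by exact_mod_cast hp.ne_zero
  rw [sigmaFn, Nat.sum_divisors_prime_pow hp, ← Finset.sum_range_reflect]
  push_cast
  rw [Finset.sum_div]
  refine Finset.sum_congr rfl fun i hi => ?_
  rw [Finset.mem_range] at hi
  rw [one_div, inv_pow, div_eq_iff (pow_ne_zero _ hp0), eq_inv_mul_iff_mul_eq₀ (pow_ne_zero _ hp0),
    ← pow_add]
  congr 1
  omega

theorem tauFn_prime_pow {p : ℕ} (hp : p.Prime) (k : ℕ) : tauFn (p ^ k) = k + 1 := by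
  rw [tauFn, Nat.divisors_prime_pow hp, Finset.card_map, Finset.card_range]

theorem sigmaFn_mul {m n : ℕ} (h : m.Coprime n) : sigmaFn (m * n) = sigmaFn m * sigmaFn n :=
  h.sum_divisors_mul

theorem tauFn_mul {m n : ℕ} (h : m.Coprime n) : tauFn (m * n) = tauFn m * tauFn n :=
  h.card_divisors_mul

theorem sigmaFn_pos {n : ℕ} (h : 0 < n) : 0 < sigmaFn n :=
  Finset.sum_pos (fun _ hd => Nat.pos_of_mem_divisors hd) (Nat.nonempty_divisors.mpr h.ne')

theorem tauFn_pos {n : ℕ} (h : 0 < n) : 0 < tauFn n :=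
  Finset.card_pos.mpr (Nat.nonempty_divisors.mpr h.ne')

theorem exists_eq_mul_prime_pows {N p q : ℕ} (hN : N ≠ 0) (hp : p.Prime) (hq : q.Prime)
    (hpq : p ≠ q) :
    ∃ m : ℕ, 0 < m ∧ m.Coprime p ∧ m.Coprime q ∧
      N = m * (p ^ N.factorization p * q ^ N.factorization q) := by
  obtain ⟨a, n, hn, hNa⟩ := Nat.exists_eq_pow_mul_and_not_dvd hN p hp.ne_one
  have hn0 : n ≠ 0 := by rintro rfl; simp at hn
  obtain ⟨b, m, hm, hnb⟩ := Nat.exists_eq_pow_mul_and_not_dvd hn0 q hq.ne_one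
  have hm0 : m ≠ 0 := by rintro rfl; simp at hm
  have hmp : ¬ p ∣ m := fun h => hn (hnb ▸ h.mul_left _)
  have hpa : p ^ a ≠ 0 := pow_ne_zero _ hp.ne_zero
  have hqb : q ^ b ≠ 0 := pow_ne_zero _ hq.ne_zero
  have ha : N.factorization p = a := by
    rw [hNa, hnb, Nat.factorization_mul hpa (mul_ne_zero hqb hm0),
      Nat.factorization_mul hqb hm0]
    simp [hp.factorization_pow, hq.factorization_pow, Nat.factorization_eq_zero_of_not_dvd hmp,
      hpq]
  have hb : N.factorization q = b := by
    rw [hNa, hnb, Nat.factorization_mul hpa (mul_ne_zero hqb hm0),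
      Nat.factorization_mul hqb hm0]
    simp [hp.factorization_pow, hq.factorization_pow, Nat.factorization_eq_zero_of_not_dvd hm,
      hpq.symm]
  refine ⟨m, Nat.pos_of_ne_zero hm0, ((hp.coprime_iff_not_dvd).mpr hmp).symm,
    ((hq.coprime_iff_not_dvd).mpr hm).symm, ?_⟩
  rw [ha, hb, hNa, hnb]
  ring

/-- The value of `σ(n) / (n τ(n) ^ ε)` at `n = m * p ^ a * q ^ b`: the first factor on the right
is symmetric in the exponents `a` and `b`. -/
theorem ratio_eq (ε : ℝ) {m p q : ℕ} (hp : p.Prime) (hq : q.Prime) (hpq : p ≠ q)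
    (hmp : m.Coprime p) (hmq : m.Coprime q) (a b : ℕ) :
    (sigmaFn (m * (p ^ a * q ^ b)) : ℝ) /
        (((m * (p ^ a * q ^ b) : ℕ) : ℝ) * (tauFn (m * (p ^ a * q ^ b)) : ℝ) ^ ε) =
      (sigmaFn m : ℝ) / (m * ((tauFn m * ((a + 1) * (b + 1)) : ℕ) : ℝ) ^ ε) *
        ((∑ i ∈ Finset.range (a + 1), (1 / (p : ℝ)) ^ i) *
          ∑ i ∈ Finset.range (b + 1), (1 / (q : ℝ)) ^ i) := by
  have hc : (p ^ a).Coprime (q ^ b) := Nat.coprime_pow_primes _ _ hp hq hpq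
  have hm : m.Coprime (p ^ a * q ^ b) := (hmp.pow_right a).mul_right (hmq.pow_right b)
  rw [sigmaFn_mul hm, sigmaFn_mul hc, tauFn_mul hm, tauFn_mul hc, tauFn_prime_pow hp,
    tauFn_prime_pow hq, ← sigmaFn_prime_pow_div hp, ← sigmaFn_prime_pow_div hq, div_mul_div_comm,
    div_mul_div_comm]
  congr 1
  · push_cast; ring
  · push_cast; ring

/-- If `N` is a `(σ,τ)`-superchampion with parameter `ε > 0` and `p > q` are primes, then
`v_p(N) ≤ v_q(N)`. -/
theorem stmt_15 (ε : ℝ) (hε : 0 < ε) (N : ℕ) (hN : IsSuperChampion ε N)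
    (p q : ℕ) (hp : p.Prime) (hq : q.Prime) (hpq : q < p) :
    N.factorization p ≤ N.factorization q := by
  by_contra! hlt
  obtain ⟨hN1, hmax⟩ := hN
  obtain ⟨m, hm, hmp, hmq, hNm⟩ := exists_eq_mul_prime_pows (Nat.one_le_iff_ne_zero.mp hN1) hp hq hpq.ne'
  generalize N.factorization p = a at *
  generalize N.factorization q = b at *
  subst hNm
  have h := hmax (m * (p ^ b * q ^ a))
    (Nat.mul_pos hm (Nat.mul_pos (pow_pos hp.pos _) (pow_pos hq.pos _)))
  rw [ratio_eq ε hp hq hpq.ne' hmp hmq, ratio_eq ε hp hq hpq.ne' hmp hmq,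
    Nat.mul_comm (b + 1) (a + 1)] at h
  have hC : 0 < (sigmaFn m : ℝ) / (m * ((tauFn m * ((a + 1) * (b + 1)) : ℕ) : ℝ) ^ ε) := by
    have h1 := sigmaFn_pos hm
    have h2 := tauFn_pos hm
    positivity
  have hp0 : (0 : ℝ) < p := by exact_mod_cast hp.pos
  have hq0 : (0 : ℝ) < q := by exact_mod_cast hq.pos
  have hlt' := geom_swap_lt (x := 1 / (p : ℝ)) (y := 1 / (q : ℝ)) (by positivity)
    (one_div_lt_one_div_of_lt hq0 (by exact_mod_cast hpq)) hlt
  have h' := le_of_mul_le_mul_left h hC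
  rw [mul_comm (∑ i ∈ Finset.range (b + 1), _)] at h'
  exact absurd hlt' (not_lt.mpr h')
end
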